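/- arXiv:2603.19699 — 7 statements merged into one kernel-verified Lean document; each statement's English description precedes it below -/
import Mathlib

section
/- Let γ : ℝ → ℝ be continuous and let G : ℝ → ℝ be differentiable with G' = γ. Let α, μ ∈ ℝ and let u, v, ψ, η : ℝ² → ℝ be twice continuously differentiable. Suppose that for all (x,y) in the closed strip ℝ × [0,1] one has ψ_x = u·η_x − v·η_y, ψ_y = u·η_y + v·η_x, u_x + v_y = −γ(ψ)·η_x, u_y − v_x = −γ(ψ)·η_y, and η_xx + η_yy = 0; that for all x ∈ ℝ (on the upper boundary y = 1) one has ψ(x,1) = 1, u(x,1)·η_x(x,1) = v(x,1)·η_y(x,1), and u(x,1)² + v(x,1)² = μ − 2α(η(x,1) − 1); and that for all x ∈ ℝ (on the lower boundary y = 0) one has v(x,0) = 0 and η(x,0) = 0. Then the flow force S(x) := ∫₀¹ [ (½(u² − v²) − α(η − 1) − (G(ψ) − G(1)) + μ/2)·η_y + u·v·η_x ](x,y) dy is constant in x, i.e., the function x ↦ S(x) is constant on ℝ. -/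
/-!
Write `P = ½(u² - v²) - α(η - 1) - (G(ψ) - G(1)) + μ/2` and `Q = uv`, so that the flow force is the
integral over a vertical section of `F = P η_y + Q η_x`. The field `(F, Q η_y - P η_x)` is
divergence free on the strip: since `η` is harmonic and its mixed derivatives agree, the second
derivatives of `η` cancel, and the remaining first-order terms reduce by the divergence and curl
equations to `-γ(ψ) v |∇η|²`, which is offset by the contribution `γ(ψ) v |∇η|²` of `G(ψ)`.
The flux `Q η_y - P η_x` vanishes on both boundary lines: at the bottom `η_x = v = 0`, and at the
top the Bernoulli condition gives `P = u²`, whence the flux is `u (v η_y - u η_x) = 0` by the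
kinematic condition. The divergence theorem on `[x₁, x₂] × [0, 1]` then gives the invariance.
-/

/-- The mixed second partial derivatives of a `C²` function on the plane agree, in the form of
iterated directional derivatives. -/
lemma mixed_partials_comm {η : ℝ × ℝ → ℝ} (hη : ContDiff ℝ 2 η) (p a b : ℝ × ℝ) :
    fderiv ℝ (fun q => fderiv ℝ η q a) p b = fderiv ℝ (fun q => fderiv ℝ η q b) p a := by
  have hd : DifferentiableAt ℝ (fderiv ℝ η) p :=
    (hη.fderiv_right (m := 1) (by norm_num)).differentiable (by norm_num) p
  have hs : IsSymmSndFDerivAt ℝ η p := hη.contDiffAt.isSymmSndFDerivAt (by simp)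
  rw [fderiv_clm_apply hd (differentiableAt_const a), fderiv_clm_apply hd (differentiableAt_const b)]
  simpa using hs b a

open MeasureTheory

/-- Flow-force invariance (Lemma 6.1): for solutions of the steady water-wave
system in conformal variables on the strip `ℝ × [0,1]`, the flow force
`S(x)` is independent of `x`. -/
theorem flow_force_invariant
    (γ G : ℝ → ℝ) (hγ : Continuous γ) (hG : ∀ s : ℝ, HasDerivAt G (γ s) s)
    (α μ : ℝ) (u v ψ η : ℝ × ℝ → ℝ)
    (hu : ContDiff ℝ 2 u) (hv : ContDiff ℝ 2 v)
    (hψ : ContDiff ℝ 2 ψ) (hη : ContDiff ℝ 2 η)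
    (hψx : ∀ p : ℝ × ℝ, p.2 ∈ Set.Icc (0:ℝ) 1 →
      fderiv ℝ ψ p ((1:ℝ), (0:ℝ))
        = u p * fderiv ℝ η p ((1:ℝ), (0:ℝ)) - v p * fderiv ℝ η p ((0:ℝ), (1:ℝ)))
    (hψy : ∀ p : ℝ × ℝ, p.2 ∈ Set.Icc (0:ℝ) 1 →
      fderiv ℝ ψ p ((0:ℝ), (1:ℝ))
        = u p * fderiv ℝ η p ((0:ℝ), (1:ℝ)) + v p * fderiv ℝ η p ((1:ℝ), (0:ℝ)))
    (hdiv : ∀ p : ℝ × ℝ, p.2 ∈ Set.Icc (0:ℝ) 1 →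
      fderiv ℝ u p ((1:ℝ), (0:ℝ)) + fderiv ℝ v p ((0:ℝ), (1:ℝ))
        = -γ (ψ p) * fderiv ℝ η p ((1:ℝ), (0:ℝ)))
    (hcurl : ∀ p : ℝ × ℝ, p.2 ∈ Set.Icc (0:ℝ) 1 →
      fderiv ℝ u p ((0:ℝ), (1:ℝ)) - fderiv ℝ v p ((1:ℝ), (0:ℝ))
        = -γ (ψ p) * fderiv ℝ η p ((0:ℝ), (1:ℝ)))
    (hharm : ∀ p : ℝ × ℝ, p.2 ∈ Set.Icc (0:ℝ) 1 →
      fderiv ℝ (fun q => fderiv ℝ η q ((1:ℝ), (0:ℝ))) p ((1:ℝ), (0:ℝ))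
        + fderiv ℝ (fun q => fderiv ℝ η q ((0:ℝ), (1:ℝ))) p ((0:ℝ), (1:ℝ)) = 0)
    (htop1 : ∀ x : ℝ, ψ (x, 1) = 1)
    (htop2 : ∀ x : ℝ, u (x, 1) * fderiv ℝ η (x, 1) ((1:ℝ), (0:ℝ))
        = v (x, 1) * fderiv ℝ η (x, 1) ((0:ℝ), (1:ℝ)))
    (htop3 : ∀ x : ℝ, (u (x, 1))^2 + (v (x, 1))^2 = μ - 2 * α * (η (x, 1) - 1))
    (hbot1 : ∀ x : ℝ, v (x, 0) = 0)
    (hbot2 : ∀ x : ℝ, η (x, 0) = 0) :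
    ∀ x₁ x₂ : ℝ,
      (∫ y in (0:ℝ)..1,
        ((1/2 * ((u (x₁, y))^2 - (v (x₁, y))^2) - α * (η (x₁, y) - 1)
            - (G (ψ (x₁, y)) - G 1) + μ / 2) * fderiv ℝ η (x₁, y) ((0:ℝ), (1:ℝ))
          + u (x₁, y) * v (x₁, y) * fderiv ℝ η (x₁, y) ((1:ℝ), (0:ℝ))))
      = (∫ y in (0:ℝ)..1,
        ((1/2 * ((u (x₂, y))^2 - (v (x₂, y))^2) - α * (η (x₂, y) - 1)
            - (G (ψ (x₂, y)) - G 1) + μ / 2) * fderiv ℝ η (x₂, y) ((0:ℝ), (1:ℝ))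
          + u (x₂, y) * v (x₂, y) * fderiv ℝ η (x₂, y) ((1:ℝ), (0:ℝ)))) := by
  intro x₁ x₂
  have hdu : Differentiable ℝ u := hu.differentiable (by norm_num)
  have hdv : Differentiable ℝ v := hv.differentiable (by norm_num)
  have hdψ : Differentiable ℝ ψ := hψ.differentiable (by norm_num)
  have hdη : Differentiable ℝ η := hη.differentiable (by norm_num)
  have hdη' : ∀ e : ℝ × ℝ, Differentiable ℝ (fun q => fderiv ℝ η q e) := fun e =>
    ((hη.fderiv_right (m := 1) (by norm_num)).clm_apply contDiff_const).differentiable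
      (by norm_num)
  let P : ℝ × ℝ → ℝ := fun p =>
    1/2 * ((u p)^2 - (v p)^2) - α * (η p - 1) - (G (ψ p) - G 1) + μ / 2
  -- `(F, K)` is the divergence-free field; `F` is the integrand of the flow force.
  let F : ℝ × ℝ → ℝ := fun p => P p * fderiv ℝ η p (0, 1) + u p * v p * fderiv ℝ η p (1, 0)
  let K : ℝ × ℝ → ℝ := fun p => u p * v p * fderiv ℝ η p (0, 1) - P p * fderiv ℝ η p (1, 0)
  have hP : ∀ p, HasFDerivAt P
      ((u p) • fderiv ℝ u p - (v p) • fderiv ℝ v p - α • fderiv ℝ η p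
        - (γ (ψ p)) • fderiv ℝ ψ p) p := fun p => by
    have hGψ : HasFDerivAt (fun q => G (ψ q)) (γ (ψ p) • fderiv ℝ ψ p) p :=
      (hG (ψ p)).comp_hasFDerivAt p (hdψ p).hasFDerivAt
    have h := ((((((hdu p).hasFDerivAt.pow 2).sub ((hdv p).hasFDerivAt.pow 2)).const_mul
      (1/2)).sub (((hdη p).hasFDerivAt.sub_const 1).const_mul α)).sub
      (hGψ.sub_const (G 1))).add_const (μ / 2)
    refine h.congr_fderiv ?_
    ext <;> simp <;> ring
  have hQ : ∀ p, HasFDerivAt (fun q => u q * v q) (u p • fderiv ℝ v p + v p • fderiv ℝ u p) p :=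
    fun p => (hdu p).hasFDerivAt.mul (hdv p).hasFDerivAt
  have hF := fun p => ((hP p).mul ((hdη' (0, 1)) p).hasFDerivAt).add
    ((hQ p).mul ((hdη' (1, 0)) p).hasFDerivAt)
  have hK := fun p => ((hQ p).mul ((hdη' (0, 1)) p).hasFDerivAt).sub
    ((hP p).mul ((hdη' (1, 0)) p).hasFDerivAt)
  have hF' : ∀ p, HasFDerivAt F (fderiv ℝ F p) p := fun p =>
    (hF p).differentiableAt.hasFDerivAt
  have hK' : ∀ p, HasFDerivAt K (fderiv ℝ K p) p := fun p =>
    (hK p).differentiableAt.hasFDerivAt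
  have hzero : ∀ p : ℝ × ℝ, p.2 ∈ Set.Icc (0:ℝ) 1 →
      fderiv ℝ F p (1, 0) + fderiv ℝ K p (0, 1) = 0 := fun p hp => by
    rw [(hF' p).unique (hF p), (hK' p).unique (hK p)]
    have h1 := hψx p hp
    have h2 := hψy p hp
    have h3 := hdiv p hp
    have h4 := hcurl p hp
    have h5 := hharm p hp
    have h6 := mixed_partials_comm hη p (0, 1) (1, 0)
    simp only [add_apply, sub_apply, smul_apply, smul_eq_mul, h1, h2, h6]
    -- After inserting `ψ_x` and `ψ_y`, the expression is
    -- `uv Δη + (u η_y + v η_x)(u_x + v_y) + (v η_y - u η_x)(u_y - v_x) + γ(ψ) v |∇η|²`.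
    linear_combination (u p * v p) * h5
      + (u p * fderiv ℝ η p (0, 1) + v p * fderiv ℝ η p (1, 0)) * h3
      + (v p * fderiv ℝ η p (0, 1) - u p * fderiv ℝ η p (1, 0)) * h4
  -- Tangential derivative of `η = 0` along the bottom.
  have hηx : ∀ x : ℝ, fderiv ℝ η (x, 0) (1, 0) = 0 := fun x => by
    have h : HasDerivAt (fun t : ℝ => η (t, 0)) (fderiv ℝ η (x, 0) (1, 0)) x :=
      (hdη (x, 0)).hasFDerivAt.comp_hasDerivAt x
        ((hasDerivAt_id x).prodMk (hasDerivAt_const x (0:ℝ)))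
    simp only [hbot2] at h
    exact h.unique (hasDerivAt_const x 0)
  have hKbot : ∀ x : ℝ, K (x, 0) = 0 := fun x => by simp [K, hηx, hbot1]
  have hKtop : ∀ x : ℝ, K (x, 1) = 0 := fun x => by
    simp only [K, P, htop1]
    linear_combination (-u (x, 1)) * htop2 x
      + 1/2 * fderiv ℝ η (x, 1) (1, 0) * htop3 x
  have hcF : Continuous F := continuous_iff_continuousAt.2 fun p => (hF' p).continuousAt
  have hcK : Continuous K := continuous_iff_continuousAt.2 fun p => (hK' p).continuousAt
  have hmain := integral2_divergence_prod_of_hasFDerivAt F K (fderiv ℝ F) (fderiv ℝ K) x₁ 0 x₂ 1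
    hcF.continuousOn hcK.continuousOn (fun p _ => hF' p) (fun p _ => hK' p)
    ((integrableOn_zero (ε' := ℝ)).congr_fun (fun p hp => (hzero p (by
      simpa [Set.uIcc_of_le] using hp.2)).symm)
      (measurableSet_uIcc.prod measurableSet_uIcc))
  have hint : ∀ x : ℝ, ∫ y in (0:ℝ)..1, fderiv ℝ F (x, y) (1, 0) + fderiv ℝ K (x, y) (0, 1) = 0 :=
    fun x => by
      rw [intervalIntegral.integral_congr (g := fun _ => (0:ℝ))
        (fun y hy => hzero (x, y) (by simpa [Set.uIcc_of_le] using hy))]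
      simp
  simp only [hint, hKbot, hKtop, intervalIntegral.integral_zero] at hmain
  have hS : ∫ y in (0:ℝ)..1, F (x₁, y) = ∫ y in (0:ℝ)..1, F (x₂, y) := by linarith
  exact hS
end

section
/- Let Q > 0 and α > 0 with Q ≠ α, and define Q̂ : (0,∞) → ℝ by Q̂(d) := Q/d² + 2α(d − 1). Then there exists exactly one d* > 0 with d* ≠ 1 such that Q̂(d*) = Q̂(1). -/
/-! Clearing denominators in `Q / d ^ 2 + 2 * α * (d - 1) = Q` and cancelling the factor `d - 1`
leaves the quadratic `2 α d² = Q (d + 1)`. The quadratic formula gives a positive root, and `d = 1`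
is a root only if `Q = α`. A second positive root `e` is impossible: `d² / (d + 1)` is injective on
the positive reals, because `e² (1 + d) - d² (1 + e) = (e - d) (e + d + e d)`. -/

/-- Away from `d = 1`, equality of total heads is the quadratic `2 α d² = Q (d + 1)`. -/
lemma totalHead_eq_iff_quadratic (Q α d : ℝ) (hd : 0 < d) (hd1 : d ≠ 1) :
    Q / d ^ 2 + 2 * α * (d - 1) = Q ↔ 2 * α * d ^ 2 = Q * (d + 1) := by
  have hd0 : d ≠ 0 := hd.ne'
  have hfac : Q / d ^ 2 + 2 * α * (d - 1) - Q
      = (d - 1) / d ^ 2 * (2 * α * d ^ 2 - Q * (d + 1)) := by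
    field_simp
    ring
  have hc : (d - 1) / d ^ 2 ≠ 0 := div_ne_zero (sub_ne_zero.2 hd1) (pow_ne_zero 2 hd0)
  rw [← sub_eq_zero, hfac, mul_eq_zero, or_iff_right hc, sub_eq_zero]

/-- For `Q > 0`, `α > 0` with `Q ≠ α`, there is exactly one depth `d* > 0`,
`d* ≠ 1`, whose conjugate laminar flow has the same total head as the flow of
depth `1`: `Q̂(d*) = Q̂(1) = Q`, where `Q̂(d) = Q/d² + 2α(d−1)`. -/
theorem totalHead_unique_conjugate_depth (Q α : ℝ) (hQ : 0 < Q) (hα : 0 < α)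
    (hne : Q ≠ α) :
    ∃! d : ℝ, 0 < d ∧ d ≠ 1 ∧ Q / d ^ 2 + 2 * α * (d - 1) = Q := by
  obtain ⟨d, hd, hquad⟩ : ∃ d : ℝ, 0 < d ∧ 2 * α * d ^ 2 = Q * (d + 1) := by
    obtain ⟨s, hs0, hs⟩ : ∃ s : ℝ, 0 ≤ s ∧ s ^ 2 = Q ^ 2 + 8 * α * Q :=
      ⟨_, Real.sqrt_nonneg _, Real.sq_sqrt (by positivity)⟩
    refine ⟨(Q + s) / (4 * α), by positivity, ?_⟩
    field_simp
    linear_combination 2 * hs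
  have hd1 : d ≠ 1 := by
    rintro rfl
    exact hne (by linarith)
  refine ⟨d, ⟨hd, hd1, (totalHead_eq_iff_quadratic Q α d hd hd1).2 hquad⟩, ?_⟩
  rintro e ⟨he, he1, heq⟩
  have hequad := (totalHead_eq_iff_quadratic Q α e he he1).1 heq
  -- Eliminating `Q` between the two quadratics leaves `e² (1 + d) = d² (1 + e)`, up to `2 α`.
  have hprod : (e - d) * (2 * α * (e + d + e * d)) = 0 := by
    linear_combination (1 + d) * hequad - (1 + e) * hquad
  have hpos : 2 * α * (e + d + e * d) ≠ 0 := by positivity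
  exact sub_eq_zero.1 ((mul_eq_zero.1 hprod).resolve_right hpos)
end

section
/- Let α > 0, Q > 0 and d > 0. If Q/d² + 2α(d − 1) = Q and (Q/2)(d − 1/d) = (α/2)(d − 1)², then d = 1. In other words, the only positive depth whose laminar flow has both the same total head and the same flow force as the laminar flow of depth 1 is d = 1 itself; consequently the problem admits no bore solutions. -/
/-- Nonexistence of bores: if a depth `d > 0` has both the same total head
(`Q/d² + 2α(d−1) = Q`) and the same flow force
(`(Q/2)(d − 1/d) = (α/2)(d − 1)²`) as the laminar flow of depth `1`,
then `d = 1`. -/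
theorem no_bore_solutions (Q α d : ℝ) (hα : 0 < α) (hQ : 0 < Q) (hd : 0 < d)
    (hhead : Q / d ^ 2 + 2 * α * (d - 1) = Q)
    (hforce : Q / 2 * (d - 1 / d) = α / 2 * (d - 1) ^ 2) :
    d = 1 := by
  by_contra hne
  have hd1 : d - 1 ≠ 0 := sub_ne_zero.mpr hne
  -- Clearing denominators, both equations carry a factor `d - 1`, which cancels.
  have h1 : Q * (d + 1) = 2 * α * d ^ 2 := by
    field_simp at hhead
    apply mul_left_cancel₀ hd1
    linear_combination -hhead
  have h2 : Q * (d + 1) = α * d * (d - 1) := by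
    field_simp at hforce
    apply mul_left_cancel₀ hd1
    linear_combination hforce
  -- Eliminating `Q` leaves `α * d * (d + 1) = 0`, impossible for positive `α` and `d`.
  have h3 : 0 < α * d * (d + 1) := by positivity
  linarith
end

section
/- Let q : [0,1] → ℝ be continuous and let w : [0,1] → ℝ be twice continuously differentiable with w''(y) + q(y)·w(y) = 0 for all y ∈ [0,1] and w(y) > 0 for all y ∈ [0,1], and set α̃_cr := w'(1)/w(1) + 1/(w(1)²·∫₀¹ w(t)⁻² dt). Let α̃ ∈ ℝ with α̃ ≠ α̃_cr. If ṽ : [0,1] → ℝ is twice continuously differentiable with ṽ''(y) + q(y)·ṽ(y) = 0 for all y ∈ [0,1], ṽ(0) = 0, and ṽ'(1) = α̃·ṽ(1), then ṽ is identically zero. -/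
/-!
The Wronskian `C = v' w - v w'` of the two solutions is constant on `[0,1]`, so `(v / w)' = C / w²`
and, as `v 0 = 0`, integration gives `v y = C w(y) ∫₀^y w⁻²` (reduction of order). Inserting this
formula at `y = 1` into the Robin condition gives `C = C w(1) I (α̃ w(1) - w'(1))` with
`I = ∫₀¹ w⁻²`. If `C ≠ 0`, solving for `α̃` yields exactly the critical value; hence `C = 0`, and
the formula shows that `v` vanishes.
-/

open MeasureTheory

/-- Two solutions of `u'' + q u = 0` on `[0,1]` have constant Wronskian there. -/
lemma wronskian_eq_at_one {q w v : ℝ → ℝ} (hw : ContDiff ℝ 2 w) (hv : ContDiff ℝ 2 v)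
    (hweq : ∀ y ∈ Set.Icc (0:ℝ) 1, deriv (deriv w) y + q y * w y = 0)
    (hveq : ∀ y ∈ Set.Icc (0:ℝ) 1, deriv (deriv v) y + q y * v y = 0)
    {y : ℝ} (hy : y ∈ Set.Icc (0:ℝ) 1) :
    deriv v y * w y - v y * deriv w y = deriv v 1 * w 1 - v 1 * deriv w 1 := by
  have key : ∀ {u : ℝ → ℝ}, ContDiff ℝ 2 u → ∀ x,
      HasDerivAt u (deriv u x) x ∧ HasDerivAt (deriv u) (deriv (deriv u) x) x := by
    intro u hu x
    have hu' : ContDiff ℝ 1 (deriv u) := hu.deriv'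
    exact ⟨(hu.differentiable (by norm_num) x).hasDerivAt,
      (hu'.differentiable (by norm_num) x).hasDerivAt⟩
  have hD : ∀ x ∈ Set.Icc (0:ℝ) 1,
      HasDerivAt (fun x => deriv v x * w x - v x * deriv w x) 0 x := by
    intro x hx
    have h := ((key hv x).2.mul (key hw x).1).sub ((key hv x).1.mul (key hw x).2)
    refine h.congr_deriv ?_
    linear_combination w x * hveq x hx - v x * hweq x hx
  have hconst := constant_of_has_deriv_right_zero
    (fun x hx => (hD x hx).continuousAt.continuousWithinAt)
    (fun x hx => (hD x ⟨hx.1, hx.2.le⟩).hasDerivWithinAt)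
  exact (hconst y hy).trans (hconst 1 (by norm_num)).symm

/-- Reduction of order: if `v' w - v w'` equals `C` on `[0,1]` and `v 0 = 0`, then
`v = C w ∫₀^y w⁻²`. -/
lemma eq_mul_integral_of_wronskian {w v : ℝ → ℝ} {C : ℝ} (hw : ContDiff ℝ 2 w)
    (hv : ContDiff ℝ 2 v) (hwpos : ∀ y ∈ Set.Icc (0:ℝ) 1, 0 < w y) (hv0 : v 0 = 0)
    (hC : ∀ y ∈ Set.Icc (0:ℝ) 1, deriv v y * w y - v y * deriv w y = C)
    {y : ℝ} (hy : y ∈ Set.Icc (0:ℝ) 1) :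
    v y = C * w y * ∫ t in (0:ℝ)..y, ((w t) ^ 2)⁻¹ := by
  have hsub : ∀ x ∈ Set.uIcc 0 y, x ∈ Set.Icc (0:ℝ) 1 := by
    intro x hx
    rw [Set.uIcc_of_le hy.1] at hx
    exact ⟨hx.1, hx.2.trans hy.2⟩
  have hcont : ContinuousOn (fun t => ((w t) ^ 2)⁻¹) (Set.uIcc 0 y) :=
    (hw.continuous.pow 2).continuousOn.inv₀
      fun x hx => pow_ne_zero 2 (hwpos x (hsub x hx)).ne'
  have hderiv : ∀ x ∈ Set.uIcc 0 y,
      HasDerivAt (fun t => v t / w t) (C * ((w x) ^ 2)⁻¹) x := by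
    intro x hx
    have h := (hv.differentiable (by norm_num) x).hasDerivAt.div
      (hw.differentiable (by norm_num) x).hasDerivAt (hwpos x (hsub x hx)).ne'
    refine h.congr_deriv ?_
    rw [hC x (hsub x hx), div_eq_mul_inv]
  have hint := intervalIntegral.integral_eq_sub_of_hasDerivAt hderiv
    (continuousOn_const.mul hcont).intervalIntegrable
  rw [intervalIntegral.integral_const_mul, hv0, zero_div, sub_zero,
    eq_div_iff (hwpos y hy).ne'] at hint
  linear_combination -hint

/-- Lemma 3.3: for a Robin coefficient `α̃ ≠ α̃_cr`, the only solution of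
`ṽ'' + q ṽ = 0` on `[0,1]` with `ṽ(0) = 0` and `ṽ'(1) = α̃ ṽ(1)` is the
trivial one. Here `w > 0` is a given solution of `w'' + q w = 0` and
`α̃_cr = w'(1)/w(1) + 1/(w(1)² ∫₀¹ w(t)⁻² dt)`. -/
theorem robin_noncritical_trivial_kernel
    (q w : ℝ → ℝ) (hq : ContinuousOn q (Set.Icc 0 1))
    (hw : ContDiff ℝ 2 w)
    (hweq : ∀ y ∈ Set.Icc (0:ℝ) 1, deriv (deriv w) y + q y * w y = 0)
    (hwpos : ∀ y ∈ Set.Icc (0:ℝ) 1, 0 < w y)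
    (acr : ℝ)
    (hacr : acr = deriv w 1 / w 1 + 1 / ((w 1) ^ 2 * ∫ t in (0:ℝ)..1, ((w t) ^ 2)⁻¹))
    (at_ : ℝ) (hat : at_ ≠ acr)
    (vt : ℝ → ℝ) (hvt : ContDiff ℝ 2 vt)
    (hvteq : ∀ y ∈ Set.Icc (0:ℝ) 1, deriv (deriv vt) y + q y * vt y = 0)
    (hvt0 : vt 0 = 0)
    (hvt1 : deriv vt 1 = at_ * vt 1) :
    ∀ y ∈ Set.Icc (0:ℝ) 1, vt y = 0 := by
  have h1 : (1:ℝ) ∈ Set.Icc (0:ℝ) 1 := by norm_num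
  have hform : ∀ y ∈ Set.Icc (0:ℝ) 1, _ := fun y hy =>
    eq_mul_integral_of_wronskian hw hvt hwpos hvt0
      (fun x hx => wronskian_eq_at_one hw hvt hweq hvteq hx) hy
  set C := deriv vt 1 * w 1 - vt 1 * deriv w 1 with hCdef
  have hC0 : C = 0 := by
    by_contra hC
    apply hat
    have hv1 := hform 1 h1
    have hw1 : w 1 ≠ 0 := (hwpos 1 h1).ne'
    set I := ∫ t in (0:ℝ)..1, ((w t) ^ 2)⁻¹
    -- The Robin condition turns the definition of `C` into a normalization of `α̃`.
    have hone : w 1 * I * (at_ * w 1 - deriv w 1) = 1 := by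
      apply mul_left_cancel₀ hC
      linear_combination -(at_ * w 1 - deriv w 1) * hv1 - w 1 * hvt1 - hCdef
    have hI : I ≠ 0 := by
      intro h
      simp [h] at hone
    rw [hacr]
    field_simp
    linear_combination hone
  intro y hy
  rw [hform y hy, hC0, zero_mul, zero_mul]
end

section
/- Let q : [0,1] → ℝ be continuous and let w : [0,1] → ℝ be twice continuously differentiable with w''(y) + q(y)·w(y) = 0 for all y ∈ [0,1] and w(y) > 0 for all y ∈ [0,1], and set α̃_cr := w'(1)/w(1) + 1/(w(1)²·∫₀¹ w(t)⁻² dt). Then for every continuously differentiable v : [0,1] → ℝ with v(0) = 0 one has ∫₀¹ (v'(y)² − q(y)·v(y)²) dy ≥ α̃_cr·v(1)². -/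
/-!
The argument is Jacobi's substitution `v = w u`, carried out in a form that needs only one
application of the fundamental theorem of calculus. Since `w'' = -q w`,
`v'² - q v² = (w' v² / w)' + w² u'²`, and for every constant `c`,
`w² u'² = 2 c u' - c² / w² + (w u' - c / w)²`.
Dropping the square and integrating gives, with `I = ∫₀¹ w⁻²` and `v 0 = 0`,
`∫₀¹ (v'² - q v²) ≥ w'(1) v(1)² / w(1) + 2 c u(1) - c² I`,
and the choice `c = u(1) / I` maximises the right-hand side, making it equal to the critical
coefficient times `v(1)²`.
-/

open MeasureTheory

/-- Variational content of Lemma 3.3: at the critical Robin coefficient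
`α̃_cr = w'(1)/w(1) + 1/(w(1)² ∫₀¹ w(t)⁻² dt)` the quadratic form is
nonnegative: `∫₀¹ (v'² − q v²) dy ≥ α̃_cr v(1)²` for all `C¹` functions `v`
with `v(0) = 0`. -/
theorem rayleigh_quotient_critical_nonneg
    (q w : ℝ → ℝ) (hq : ContinuousOn q (Set.Icc 0 1))
    (hw : ContDiff ℝ 2 w)
    (hweq : ∀ y ∈ Set.Icc (0:ℝ) 1, deriv (deriv w) y + q y * w y = 0)
    (hwpos : ∀ y ∈ Set.Icc (0:ℝ) 1, 0 < w y)
    (acr : ℝ)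
    (hacr : acr = deriv w 1 / w 1 + 1 / ((w 1) ^ 2 * ∫ t in (0:ℝ)..1, ((w t) ^ 2)⁻¹)) :
    ∀ v : ℝ → ℝ, ContDiff ℝ 1 v → v 0 = 0 →
      acr * (v 1) ^ 2 ≤ ∫ y in (0:ℝ)..1, ((deriv v y) ^ 2 - q y * (v y) ^ 2) := by
  intro v hv hv0
  have hwd : ∀ y, HasDerivAt w (deriv w y) y := fun y =>
    (hw.differentiable (by norm_num) y).hasDerivAt
  have hw' : ContDiff ℝ 1 (deriv w) := by
    have h : ContDiff ℝ (1 + 1) w := by simpa [one_add_one_eq_two] using hw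
    exact (contDiff_succ_iff_deriv.1 h).2.2
  have hwdd : ∀ y, HasDerivAt (deriv w) (deriv (deriv w) y) y := fun y =>
    (hw'.differentiable (by norm_num) y).hasDerivAt
  have hvd : ∀ y, HasDerivAt v (deriv v y) y := fun y =>
    (hv.differentiable (by norm_num) y).hasDerivAt
  have cw : ContinuousOn w (Set.Icc 0 1) := hw.continuous.continuousOn
  have cw1 : ContinuousOn (deriv w) (Set.Icc 0 1) := hw'.continuous.continuousOn
  have cw2 : ContinuousOn (deriv (deriv w)) (Set.Icc 0 1) :=
    (hw'.continuous_deriv le_rfl).continuousOn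
  have cv : ContinuousOn v (Set.Icc 0 1) := hv.continuous.continuousOn
  have cv1 : ContinuousOn (deriv v) (Set.Icc 0 1) :=
    (hv.continuous_deriv le_rfl).continuousOn
  have hne : ∀ y ∈ Set.Icc (0:ℝ) 1, w y ≠ 0 := fun y hy => (hwpos y hy).ne'
  have hne2 : ∀ y ∈ Set.Icc (0:ℝ) 1, w y ^ 2 ≠ 0 := fun y hy => pow_ne_zero 2 (hne y hy)
  have huIcc : Set.uIcc (0:ℝ) 1 = Set.Icc 0 1 := Set.uIcc_of_le zero_le_one
  have cinv : ContinuousOn (fun t => ((w t) ^ 2)⁻¹) (Set.Icc 0 1) := (cw.pow 2).inv₀ hne2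
  have iinv : IntervalIntegrable (fun t => ((w t) ^ 2)⁻¹) volume 0 1 :=
    ContinuousOn.intervalIntegrable (by rwa [huIcc])
  have hI : 0 < ∫ t in (0:ℝ)..1, ((w t) ^ 2)⁻¹ := by
    refine intervalIntegral.intervalIntegral_pos_of_pos_on iinv (fun x hx => ?_) one_pos
    have := hwpos x (Set.Ioo_subset_Icc_self hx)
    positivity
  set I := ∫ t in (0:ℝ)..1, ((w t) ^ 2)⁻¹ with hIdef
  have hw1 : 0 < w 1 := hwpos 1 (by simp)
  obtain ⟨c, hc⟩ : ∃ c, c = v 1 / w 1 / I := ⟨_, rfl⟩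
  -- `f` is the derivative of `(w' v² + 2 c v) / w = w' v² / w + 2 c u`.
  let f : ℝ → ℝ := fun y =>
    ((deriv (deriv w) y * v y ^ 2 + deriv w y * (2 * v y * deriv v y) + 2 * c * deriv v y) * w y
      - (deriv w y * v y ^ 2 + 2 * c * v y) * deriv w y) / w y ^ 2
  have hF : ∀ y ∈ Set.uIcc (0:ℝ) 1,
      HasDerivAt (fun y => (deriv w y * v y ^ 2 + 2 * c * v y) / w y) (f y) y := by
    intro y hy
    rw [huIcc] at hy
    refine ((((hwdd y).mul ((hvd y).pow 2)).add ((hvd y).const_mul (2 * c))).div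
      (hwd y) (hne y hy)).congr_deriv ?_
    simp [f]
  have cf : ContinuousOn f (Set.Icc 0 1) := by
    refine ContinuousOn.div ?_ (cw.pow 2) hne2
    fun_prop
  have iF : IntervalIntegrable f volume 0 1 :=
    ContinuousOn.intervalIntegrable (by rwa [huIcc])
  have iQ : IntervalIntegrable (fun y => (deriv v y) ^ 2 - q y * (v y) ^ 2) volume 0 1 :=
    ContinuousOn.intervalIntegrable (by rw [huIcc]; fun_prop)
  have hFTC := intervalIntegral.integral_eq_sub_of_hasDerivAt hF iF
  have hmono : ∫ y in (0:ℝ)..1, (f y - c ^ 2 * ((w y) ^ 2)⁻¹)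
      ≤ ∫ y in (0:ℝ)..1, ((deriv v y) ^ 2 - q y * (v y) ^ 2) := by
    refine intervalIntegral.integral_mono_on zero_le_one (iF.sub (iinv.const_mul _)) iQ
      (fun y hy => ?_)
    have h0 := hne y hy
    have h2 : deriv (deriv w) y = -(q y * w y) := by linarith [hweq y hy]
    -- The difference of the two integrands is `(w u' - c / w)²`.
    have key : ((deriv v y) ^ 2 - q y * (v y) ^ 2) - (f y - c ^ 2 * ((w y) ^ 2)⁻¹)
        = (deriv v y - deriv w y * v y / w y - c / w y) ^ 2 := by
      simp only [f, h2]
      field_simp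
      ring
    linarith [sq_nonneg (deriv v y - deriv w y * v y / w y - c / w y)]
  rw [intervalIntegral.integral_sub iF (iinv.const_mul _),
    intervalIntegral.integral_const_mul, hFTC, ← hIdef] at hmono
  refine le_trans (le_of_eq ?_) hmono
  rw [hacr, hc, hv0]
  field_simp
  ring
end

section
/- Let q : [0,1] → ℝ be continuous and let w : [0,1] → ℝ be twice continuously differentiable with w''(y) + q(y)·w(y) = 0 for all y ∈ [0,1] and w(y) > 0 for all y ∈ [0,1], and set α̃_cr := w'(1)/w(1) + 1/(w(1)²·∫₀¹ w(t)⁻² dt). Let α̃ < α̃_cr. Then for every continuously differentiable v : [0,1] → ℝ with v(0) = 0 that is not identically zero, one has the strict inequality ∫₀¹ (v'(y)² − q(y)·v(y)²) dy − α̃·v(1)² > 0. -/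
/-!
The proof is Jacobi's factorization of the quadratic form. With `g = v' - (w'/w) v = w (v/w)'`,
the equation `w'' = -q w` gives the pointwise identity `v'² - q v² = g² + ((w'/w) v²)'`
(`picone_identity`), so the form equals `∫₀¹ g² + (w'(1)/w(1) - α̃) v(1)²`. Since `v(0) = 0`,
`v(y)/w(y) = ∫₀^y g/w`, and Cauchy–Schwarz bounds `(v(y)/w(y))²` by `∫₀^y g² · ∫₀^y w⁻²`
(`ratio_sq_le`). For `y = 1` this bounds the form below by `(α̃_cr - α̃) v(1)²`, which is
positive when `v(1) ≠ 0`. When `v(1) = 0` the form is `∫₀¹ g²`, and the same bound at a point `y`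
with `v(y) ≠ 0` makes this positive.
-/

open MeasureTheory

/-- Cauchy–Schwarz on an interval, with one factor nondegenerate. -/
lemma sq_integral_mul_le {b : ℝ} (hb : 0 ≤ b) {f h : ℝ → ℝ}
    (hf : ContinuousOn f (Set.Icc 0 b)) (hh : ContinuousOn h (Set.Icc 0 b))
    (hpos : 0 < ∫ t in (0:ℝ)..b, h t ^ 2) :
    (∫ t in (0:ℝ)..b, f t * h t) ^ 2 ≤
      (∫ t in (0:ℝ)..b, f t ^ 2) * ∫ t in (0:ℝ)..b, h t ^ 2 := by
  rw [← Set.uIcc_of_le hb] at hf hh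
  have i1 : IntervalIntegrable (fun t => f t ^ 2) volume 0 b := (hf.pow 2).intervalIntegrable
  have i2 : IntervalIntegrable (fun t => f t * h t) volume 0 b := (hf.mul hh).intervalIntegrable
  have i3 : IntervalIntegrable (fun t => h t ^ 2) volume 0 b := (hh.pow 2).intervalIntegrable
  set B := ∫ t in (0:ℝ)..b, f t * h t
  set C := ∫ t in (0:ℝ)..b, h t ^ 2
  -- `B / C` is the coefficient of the orthogonal projection of `f` onto `h`.
  have key : 0 ≤ ∫ t in (0:ℝ)..b, (f t - B / C * h t) ^ 2 :=
    intervalIntegral.integral_nonneg hb fun t _ => sq_nonneg _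
  have e : (∫ t in (0:ℝ)..b, (f t - B / C * h t) ^ 2) =
      (∫ t in (0:ℝ)..b, f t ^ 2) - 2 * (B / C) * B + (B / C) ^ 2 * C := by
    rw [← intervalIntegral.integral_const_mul, ← intervalIntegral.integral_const_mul,
      ← intervalIntegral.integral_sub i1 (i2.const_mul _),
      ← intervalIntegral.integral_add (i1.sub (i2.const_mul _)) (i3.const_mul _)]
    congr 1
    ext t
    ring
  rw [e] at key
  have e2 : 2 * (B / C) * B - (B / C) ^ 2 * C = B ^ 2 / C := by
    field_simp
    ring
  rw [← div_le_iff₀ hpos]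
  linarith

/-- Integrated form of the Jacobi–Picone identity; the boundary term at `0` vanishes as
`v 0 = 0`. -/
lemma picone_identity {q w v : ℝ → ℝ} (hq : ContinuousOn q (Set.Icc 0 1))
    (hw : ContDiff ℝ 2 w)
    (hweq : ∀ y ∈ Set.Icc (0:ℝ) 1, deriv (deriv w) y + q y * w y = 0)
    (hwpos : ∀ y ∈ Set.Icc (0:ℝ) 1, 0 < w y) (hv : ContDiff ℝ 1 v) (hv0 : v 0 = 0) :
    (∫ y in (0:ℝ)..1, ((deriv v y) ^ 2 - q y * (v y) ^ 2)) =
      (∫ y in (0:ℝ)..1, (deriv v y - deriv w y / w y * v y) ^ 2)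
        + deriv w 1 / w 1 * v 1 ^ 2 := by
  have hw1 : ContDiff ℝ 1 (deriv w) := ((contDiff_succ_iff_deriv (n := 1)).1 hw).2.2
  have cv' : Continuous (deriv v) := hv.continuous_deriv le_rfl
  have cw' : Continuous (deriv w) := hw1.continuous
  have i1 : IntervalIntegrable (fun y => (deriv v y) ^ 2 - q y * (v y) ^ 2) volume 0 1 := by
    apply ContinuousOn.intervalIntegrable
    rw [Set.uIcc_of_le zero_le_one]
    exact (cv'.pow 2).continuousOn.sub (hq.mul (hv.continuous.pow 2).continuousOn)
  have i2 : IntervalIntegrable (fun y => (deriv v y - deriv w y / w y * v y) ^ 2)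
      volume 0 1 := by
    apply ContinuousOn.intervalIntegrable
    rw [Set.uIcc_of_le zero_le_one]
    exact (cv'.continuousOn.sub ((cw'.continuousOn.div hw.continuous.continuousOn
      fun y hy => (hwpos y hy).ne').mul hv.continuous.continuousOn)).pow 2
  have ftc := intervalIntegral.integral_eq_sub_of_hasDerivAt (a := 0) (b := 1)
    (f := fun y => deriv w y / w y * v y ^ 2) (fun y hy => ?_) (i1.sub i2)
  · rw [intervalIntegral.integral_sub i1 i2] at ftc
    simp only [hv0] at ftc
    linarith
  · rw [Set.uIcc_of_le zero_le_one] at hy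
    have h0 := (hwpos y hy).ne'
    have dw := (hw.differentiable (by norm_num) y).hasDerivAt
    have dw' := (hw1.differentiable (by norm_num) y).hasDerivAt
    have dv := (hv.differentiable (by norm_num) y).hasDerivAt
    refine ((dw'.div dw h0).mul (dv.pow 2)).congr_deriv ?_
    rw [show deriv (deriv w) y = - (q y * w y) by linarith [hweq y hy]]
    simp only [Pi.div_apply, Pi.pow_apply]
    field_simp
    ring

/-- Pointwise bound of `v / w` through the factored derivative
`v' - (w'/w) v = w (v/w)'`, with the positivity of the integral of `w⁻²` needed to divide by it. -/
lemma ratio_sq_le {w v : ℝ → ℝ} (hw : ContDiff ℝ 2 w)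
    (hv : ContDiff ℝ 1 v) (hv0 : v 0 = 0) {b : ℝ} (hb : 0 < b)
    (hwpos : ∀ y ∈ Set.Icc (0:ℝ) b, 0 < w y) :
    0 < (∫ t in (0:ℝ)..b, ((w t) ^ 2)⁻¹) ∧
    (v b / w b) ^ 2 ≤ (∫ y in (0:ℝ)..b, (deriv v y - deriv w y / w y * v y) ^ 2) *
      ∫ t in (0:ℝ)..b, ((w t) ^ 2)⁻¹ := by
  have cv' : Continuous (deriv v) := hv.continuous_deriv le_rfl
  have cw' : Continuous (deriv w) := hw.continuous_deriv (by norm_num)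
  have cg : ContinuousOn (fun y => deriv v y - deriv w y / w y * v y) (Set.Icc 0 b) :=
    cv'.continuousOn.sub ((cw'.continuousOn.div hw.continuous.continuousOn
      fun y hy => (hwpos y hy).ne').mul hv.continuous.continuousOn)
  have ci : ContinuousOn (fun y => (w y)⁻¹) (Set.Icc 0 b) :=
    hw.continuous.continuousOn.inv₀ fun y hy => (hwpos y hy).ne'
  have hpos : 0 < ∫ t in (0:ℝ)..b, ((w t)⁻¹) ^ 2 := by
    apply intervalIntegral.intervalIntegral_pos_of_pos_on _ _ hb
    · apply ContinuousOn.intervalIntegrable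
      rw [Set.uIcc_of_le hb.le]
      exact ci.pow 2
    · intro y hy
      have := hwpos y (Set.Ioo_subset_Icc_self hy)
      positivity
  have ftc := intervalIntegral.integral_eq_sub_of_hasDerivAt (a := 0) (b := b)
    (f := fun y => v y / w y)
    (f' := fun y => (deriv v y - deriv w y / w y * v y) * (w y)⁻¹) (fun y hy => ?_) ?_
  · have cs := sq_integral_mul_le hb.le cg ci hpos
    rw [ftc] at cs
    simp only [hv0, zero_div, sub_zero] at cs
    simp only [← inv_pow]
    exact ⟨hpos, cs⟩
  · rw [Set.uIcc_of_le hb.le] at hy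
    have h0 := (hwpos y hy).ne'
    have dw := (hw.differentiable (by norm_num) y).hasDerivAt
    have dv := (hv.differentiable (by norm_num) y).hasDerivAt
    refine (dv.div dw h0).congr_deriv ?_
    field_simp
  · apply ContinuousOn.intervalIntegrable
    rw [Set.uIcc_of_le hb.le]
    exact cg.mul ci

/-- Key positivity in Lemma 3.3: for a Robin coefficient `α̃ < α̃_cr`, the
quadratic form is strictly positive on nontrivial `C¹` functions vanishing at
`0`: `∫₀¹ (v'² − q v²) dy − α̃ v(1)² > 0`. -/
theorem rayleigh_quotient_subcritical_pos
    (q w : ℝ → ℝ) (hq : ContinuousOn q (Set.Icc 0 1))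
    (hw : ContDiff ℝ 2 w)
    (hweq : ∀ y ∈ Set.Icc (0:ℝ) 1, deriv (deriv w) y + q y * w y = 0)
    (hwpos : ∀ y ∈ Set.Icc (0:ℝ) 1, 0 < w y)
    (acr : ℝ)
    (hacr : acr = deriv w 1 / w 1 + 1 / ((w 1) ^ 2 * ∫ t in (0:ℝ)..1, ((w t) ^ 2)⁻¹))
    (at_ : ℝ) (hat : at_ < acr) :
    ∀ v : ℝ → ℝ, ContDiff ℝ 1 v → v 0 = 0 → (∃ y ∈ Set.Icc (0:ℝ) 1, v y ≠ 0) →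
      0 < (∫ y in (0:ℝ)..1, ((deriv v y) ^ 2 - q y * (v y) ^ 2)) - at_ * (v 1) ^ 2 := by
  intro v hv hv0 ⟨y, hy, hvy⟩
  rw [picone_identity hq hw hweq hwpos hv hv0]
  by_cases h1 : v 1 = 0
  · have hy0 : 0 < y := lt_of_le_of_ne hy.1 fun h => hvy (h ▸ hv0)
    have hsub : Set.Icc 0 y ⊆ Set.Icc (0:ℝ) 1 := Set.Icc_subset_Icc_right hy.2
    obtain ⟨hI, hle⟩ := ratio_sq_le hw hv hv0 hy0 fun t ht => hwpos t (hsub ht)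
    have hr : 0 < (v y / w y) ^ 2 := by
      have := div_ne_zero hvy (hwpos y hy).ne'
      positivity
    have hg : 0 < ∫ t in (0:ℝ)..y, (deriv v t - deriv w t / w t * v t) ^ 2 :=
      pos_of_mul_pos_left (hr.trans_le hle) hI.le
    have cg : ContinuousOn (fun t => (deriv v t - deriv w t / w t * v t) ^ 2) (Set.Icc 0 1) :=
      ((hv.continuous_deriv le_rfl).continuousOn.sub
        (((hw.continuous_deriv (by norm_num)).continuousOn.div hw.continuous.continuousOn
          fun t ht => (hwpos t ht).ne').mul hv.continuous.continuousOn)).pow 2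
    have mono := intervalIntegral.integral_mono_interval (μ := volume) le_rfl hy.1 hy.2
      (f := fun t => (deriv v t - deriv w t / w t * v t) ^ 2)
      (Filter.Eventually.of_forall fun t => sq_nonneg _)
      (by
        apply ContinuousOn.intervalIntegrable
        rwa [Set.uIcc_of_le zero_le_one])
    simp only [h1]
    linarith
  · obtain ⟨hI, hle⟩ := ratio_sq_le hw hv hv0 zero_lt_one hwpos
    have hw1 := hwpos 1 (by simp)
    rw [← div_le_iff₀ hI] at hle
    have e : (v 1 / w 1) ^ 2 / (∫ t in (0:ℝ)..1, ((w t) ^ 2)⁻¹) =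
        1 / ((w 1) ^ 2 * ∫ t in (0:ℝ)..1, ((w t) ^ 2)⁻¹) * v 1 ^ 2 := by
      field_simp
    rw [e] at hle
    have hp : 0 < (acr - at_) * v 1 ^ 2 := mul_pos (sub_pos.2 hat) (by positivity)
    rw [hacr] at hp
    linarith
end

section
/- Let u : ℝ² → ℝ be continuous on the closed strip ℝ × [0,1] and bounded there, twice continuously differentiable on the open strip ℝ × (0,1) with u_xx + u_yy ≤ 0 on ℝ × (0,1), and suppose u(x,0) ≥ 0 and u(x,1) ≥ 0 for all x ∈ ℝ. Then u(x,y) ≥ 0 for all (x,y) ∈ ℝ × [0,1]. -/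
/-!
Suppose `u p₀ < 0` at some point of the closed strip. The barrier `w (x, y) = x² + 2 - 2y²`
is nonnegative on the strip, tends to infinity as `|x| → ∞`, and has `Δw = 2 - 4 < 0`. For small
`ε > 0` the function `v = u + ε w` is still negative at `p₀`, while `v ≥ 0` on both boundary lines
and, by boundedness of `u`, outside a compact rectangle. So `v` attains a negative minimum over
the strip at an interior point. The second-derivative test along the two axes
(`second_directional_deriv_nonneg`) gives `0 ≤ Δv = Δu - 2ε` there, contradicting `Δu ≤ 0`.
-/

/-- Second-order necessary condition at a local minimum. If the second derivative were negative,
the point would also be a local maximum by the second-derivative test, so `f` would be locally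
constant and its second derivative would vanish. -/
lemma deriv_deriv_nonneg_of_isLocalMin {f : ℝ → ℝ} {x : ℝ} (hf : ContinuousAt f x)
    (hmin : IsLocalMin f x) : 0 ≤ deriv (deriv f) x := by
  by_contra! h
  have hmax : IsLocalMax f x := isLocalMax_of_deriv_deriv_neg h hmin.deriv_eq_zero hf
  have hconst : f =ᶠ[nhds x] fun _ => f x := by
    filter_upwards [hmin, hmax] with t h1 h2 using le_antisymm h2 h1
  have h0 := hconst.deriv.deriv_eq
  simp at h0
  linarith

/-- Second-derivative test along the line `p + t e` for a quadratic perturbation of `u`. -/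
lemma second_directional_deriv_nonneg {u : ℝ × ℝ → ℝ} {p : ℝ × ℝ} (e : ℝ × ℝ) (A B : ℝ)
    (hu : ContDiffAt ℝ 2 u p)
    (hmin : IsLocalMin (fun t : ℝ => u (p + t • e) + (A * t + B * t ^ 2)) 0) :
    0 ≤ fderiv ℝ (fun q => fderiv ℝ u q e) p e + 2 * B := by
  have hline : ∀ t : ℝ, HasDerivAt (fun t : ℝ => p + t • e) e t := fun t => by
    simpa using ((hasDerivAt_id t).smul_const e).const_add p
  have hdiff : ∀ᶠ q in nhds p, DifferentiableAt ℝ u q := by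
    filter_upwards [hu.eventually (by simp)] with q hq
    exact hq.differentiableAt (by simp)
  have htend : Filter.Tendsto (fun t : ℝ => p + t • e) (nhds 0) (nhds p) := by
    have := (hline 0).continuousAt.tendsto
    simpa using this
  have hpoly : ∀ t : ℝ, HasDerivAt (fun t : ℝ => A * t + B * t ^ 2) (A + B * (2 * t)) t :=
    fun t => by
      simpa using ((hasDerivAt_id t).const_mul A).fun_add (((hasDerivAt_id t).pow 2).const_mul B)
  have hderiv : ∀ᶠ t : ℝ in nhds 0,
      HasDerivAt (fun t : ℝ => u (p + t • e) + (A * t + B * t ^ 2))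
        (fderiv ℝ u (p + t • e) e + (A + B * (2 * t))) t := by
    filter_upwards [htend.eventually hdiff] with t ht
    exact (ht.hasFDerivAt.comp_hasDerivAt t (hline t)).add (hpoly t)
  have heq : deriv (fun t : ℝ => u (p + t • e) + (A * t + B * t ^ 2)) =ᶠ[nhds 0]
      fun t => fderiv ℝ u (p + t • e) e + (A + B * (2 * t)) :=
    hderiv.mono fun t ht => ht.deriv
  have hd2 : DifferentiableAt ℝ (fun q => fderiv ℝ u q e) p :=
    ((hu.fderiv_right (m := 1) (by norm_num)).differentiableAt (by simp)).clm_apply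
      (differentiableAt_const e)
  have hsecond : HasDerivAt (fun t : ℝ => fderiv ℝ u (p + t • e) e + (A + B * (2 * t)))
      (fderiv ℝ (fun q => fderiv ℝ u q e) p e + 2 * B) 0 := by
    have h1 : HasFDerivAt (fun q => fderiv ℝ u q e) (fderiv ℝ (fun q => fderiv ℝ u q e) p)
        (p + (0 : ℝ) • e) := by simpa using hd2.hasFDerivAt
    have h2 : HasDerivAt (fun t : ℝ => A + B * (2 * t)) (2 * B) 0 := by
      have := (((hasDerivAt_id (0 : ℝ)).const_mul 2).const_mul B).const_add A
      simpa [mul_comm] using this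
    exact (h1.comp_hasDerivAt (0 : ℝ) (hline 0)).add h2
  have := deriv_deriv_nonneg_of_isLocalMin hderiv.self_of_nhds.continuousAt hmin
  rwa [heq.deriv_eq, hsecond.deriv] at this


/-- Maximum principle on the strip: a bounded continuous function on the
closed strip `ℝ × [0,1]`, superharmonic (`Δu ≤ 0`) on the open strip and
nonnegative on both boundary lines, is nonnegative on the closed strip. -/
theorem strip_superharmonic_nonneg
    (u : ℝ × ℝ → ℝ)
    (hcont : ContinuousOn u {p : ℝ × ℝ | p.2 ∈ Set.Icc (0:ℝ) 1})
    (hbdd : ∃ C : ℝ, ∀ p : ℝ × ℝ, p.2 ∈ Set.Icc (0:ℝ) 1 → |u p| ≤ C)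
    (hsmooth : ContDiffOn ℝ 2 u {p : ℝ × ℝ | p.2 ∈ Set.Ioo (0:ℝ) 1})
    (hsuper : ∀ p : ℝ × ℝ, p.2 ∈ Set.Ioo (0:ℝ) 1 →
      fderiv ℝ (fun q => fderiv ℝ u q ((1:ℝ), (0:ℝ))) p ((1:ℝ), (0:ℝ))
        + fderiv ℝ (fun q => fderiv ℝ u q ((0:ℝ), (1:ℝ))) p ((0:ℝ), (1:ℝ)) ≤ 0)
    (hbot : ∀ x : ℝ, 0 ≤ u (x, 0))
    (htop : ∀ x : ℝ, 0 ≤ u (x, 1)) :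
    ∀ p : ℝ × ℝ, p.2 ∈ Set.Icc (0:ℝ) 1 → 0 ≤ u p := by
  intro p₀ hp₀
  by_contra! hneg
  obtain ⟨C, hC⟩ := hbdd
  obtain ⟨x₀, y₀⟩ := p₀
  have hC0 : 0 ≤ C := (abs_nonneg _).trans (hC _ hp₀)
  -- `ε` is chosen so that `ε w (x₀, y₀) < -u (x₀, y₀)`, since `w (x₀, y₀) < x₀² + 3`.
  obtain ⟨ε, hε, hεp⟩ : ∃ ε : ℝ, 0 < ε ∧ ε * (x₀ ^ 2 + 3) = -u (x₀, y₀) :=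
    ⟨-u (x₀, y₀) / (x₀ ^ 2 + 3), div_pos (by linarith) (by positivity), by field_simp⟩
  set v : ℝ × ℝ → ℝ := fun p => u p + ε * (p.1 ^ 2 + 2 - 2 * p.2 ^ 2) with hv
  have hvneg : v (x₀, y₀) < 0 := by
    simp only [hv]
    nlinarith [mul_nonneg hε.le (sq_nonneg y₀)]
  have hw : ∀ p : ℝ × ℝ, p.2 ∈ Set.Icc (0 : ℝ) 1 → p.1 ^ 2 ≤ p.1 ^ 2 + 2 - 2 * p.2 ^ 2 := by
    rintro ⟨x, y⟩ ⟨h0, h1⟩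
    dsimp only at *
    nlinarith
  -- Beyond `|x| = R` the barrier dominates the bound: `ε R² ≥ ε R ≥ C`.
  set R : ℝ := C / ε + 1 + |x₀| with hR
  have hCε : 0 ≤ C / ε := by positivity
  have hfar : ∀ p : ℝ × ℝ, p.2 ∈ Set.Icc (0 : ℝ) 1 → R < |p.1| → 0 ≤ v p := by
    intro p hp hlt
    have h1 := (abs_le.1 (hC p hp)).1
    have h2 : C / ε ≤ p.1 ^ 2 := by
      rw [← sq_abs]
      nlinarith [abs_nonneg x₀]
    have h3 : C ≤ ε * p.1 ^ 2 := by
      rw [div_le_iff₀ hε] at h2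
      linarith
    have h4 := mul_le_mul_of_nonneg_left (hw p hp) hε.le
    simp only [hv]
    linarith
  have hvcont : ContinuousOn v {p : ℝ × ℝ | p.2 ∈ Set.Icc (0 : ℝ) 1} :=
    hcont.add (Continuous.continuousOn (by fun_prop))
  have hmemK : (x₀, y₀) ∈ Set.Icc (-R) R ×ˢ Set.Icc (0 : ℝ) 1 :=
    ⟨abs_le.1 (by rw [hR]; linarith), hp₀⟩
  obtain ⟨q, hqK, hqmin⟩ := (isCompact_Icc.prod isCompact_Icc).exists_isMinOn ⟨_, hmemK⟩
    (hvcont.mono fun p hp => hp.2)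
  have hqneg : v q < 0 := (hqmin hmemK).trans_lt hvneg
  have hglob : ∀ p : ℝ × ℝ, p.2 ∈ Set.Icc (0 : ℝ) 1 → v q ≤ v p := by
    intro p hp
    by_cases h : |p.1| ≤ R
    · exact hqmin ⟨abs_le.1 h, hp⟩
    · exact hqneg.le.trans (hfar p hp (not_le.1 h))
  have hqint : q.2 ∈ Set.Ioo (0 : ℝ) 1 := by
    have hpos : 0 ≤ ε * (q.1 ^ 2 + 2 - 2 * q.2 ^ 2) :=
      mul_nonneg hε.le ((sq_nonneg _).trans (hw q hqK.2))
    have huq : u q < 0 := by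
      simp only [hv] at hqneg
      linarith
    refine ⟨lt_of_le_of_ne hqK.2.1 fun h => ?_, lt_of_le_of_ne hqK.2.2 fun h => ?_⟩
    · have := hbot q.1
      rw [show (q.1, (0 : ℝ)) = q from Prod.ext rfl h] at this
      exact absurd this (not_le.2 huq)
    · have := htop q.1
      rw [show (q.1, (1 : ℝ)) = q from Prod.ext rfl h.symm] at this
      exact absurd this (not_le.2 huq)
  have hopen : IsOpen {p : ℝ × ℝ | p.2 ∈ Set.Ioo (0 : ℝ) 1} :=
    isOpen_Ioo.preimage continuous_snd
  have hu : ContDiffAt ℝ 2 u q := hsmooth.contDiffAt (hopen.mem_nhds hqint)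
  have hline : ∀ e : ℝ × ℝ, ∀ᶠ t : ℝ in nhds 0, v q ≤ v (q + t • e) := by
    intro e
    have hc : Filter.Tendsto (fun t : ℝ => q + t • e) (nhds 0) (nhds q) := by
      have : Continuous fun t : ℝ => q + t • e := by fun_prop
      simpa using this.tendsto 0
    filter_upwards [hc.eventually (hopen.mem_nhds hqint)] with t ht
    exact hglob _ (Set.Ioo_subset_Icc_self ht)
  -- Along each axis, `ε w` is the quadratic below plus a constant.
  have hx := second_directional_deriv_nonneg ((1 : ℝ), (0 : ℝ)) (2 * ε * q.1) ε hu (by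
    filter_upwards [hline (1, 0)] with t ht
    simp [hv] at ht ⊢
    linarith)
  have hy := second_directional_deriv_nonneg ((0 : ℝ), (1 : ℝ)) (-4 * ε * q.2) (-2 * ε) hu (by
    filter_upwards [hline (0, 1)] with t ht
    simp [hv] at ht ⊢
    linarith)
  linarith [hsuper q hqint]
end
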